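/- arXiv:1911.09995 — 4 statements merged into one kernel-verified Lean document; each statement's English description precedes it below -/
import Mathlib

section
/- Let n ≥ 1 be an integer, L > 0, and let u : ℝ → ℝ be a measurable function with |u(z) − u(0)| ≤ L |z|ⁿ for all z ∈ ℝ. Let t > 0, κ ∈ (0,1), and let y ∈ ℝ with |y| ≤ 2 κ^{1/(n+2)}. Let (Ω, F, P) be a probability space and let W¹, W² : [0,t] × Ω → ℝ be jointly measurable processes such that for each τ ∈ [0,t] and each i ∈ {1,2}, the random variable Wⁱ_τ is Gaussian with mean 0 and variance t − τ. Then there is a constant C depending only on n and L such that E | ∫₀ᵗ ( u(y + √(2κ) W¹_τ) − u(y + √(2κ) W²_τ) ) dτ |² ≤ C ( (κ^{n/(n+2)} t)² + (κ^{n/(n+2)} t)^{n+2} ). -/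
/-!
The growth condition gives `|u(y + a w₁) - u(y + a w₂)|² ≤ 2 L² (|y + a w₁|²ⁿ + |y + a w₂|²ⁿ)`, and each
term is at most `2²ⁿ⁻¹ (y²ⁿ + a²ⁿ wᵢ²ⁿ)` (`sq_increment_le`). With `a = √(2κ)`, taking expectations
and using that the `2n`-th moment of `N(0, v)` is `M vⁿ`, where `M` is that of `N(0, 1)`
(`integral_pow_gaussianReal`), bounds the second moment of the integrand at time `τ ≤ t` by
`c (y²ⁿ + κⁿ M tⁿ)`. Cauchy-Schwarz in `τ` and Tonelli (`second_moment_integral_le`) cost a factor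
`t²`, and the result follows from `y²ⁿ ≤ 4ⁿ (κ^{n/(n+2)})²` and
`t² κⁿ tⁿ = (κ^{n/(n+2)} t)ⁿ⁺²`. The exact value of `M` plays no role.

Estimates of iterated integrals are made with `∫⁻`, which avoids proving integrability of the
time integral.
-/

open MeasureTheory ProbabilityTheory Set

lemma sq_increment_le {n : ℕ} {L : ℝ} {u : ℝ → ℝ} (hu : ∀ z : ℝ, |u z - u 0| ≤ L * |z| ^ n)
    (y a w₁ w₂ : ℝ) :
    (u (y + a * w₁) - u (y + a * w₂)) ^ 2 ≤
      2 * L ^ 2 * 2 ^ (2 * n - 1) *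
        (2 * y ^ (2 * n) + (a ^ 2) ^ n * (w₁ ^ (2 * n) + w₂ ^ (2 * n))) := by
  have key : ∀ w : ℝ, (u (y + a * w) - u 0) ^ 2 ≤
      L ^ 2 * (2 ^ (2 * n - 1) * (y ^ (2 * n) + (a ^ 2) ^ n * w ^ (2 * n))) := by
    intro w
    have h1 : (u (y + a * w) - u 0) ^ 2 ≤ (L * |y + a * w| ^ n) ^ 2 := by
      rw [← sq_abs (u (y + a * w) - u 0)]
      exact pow_le_pow_left₀ (abs_nonneg _) (hu _) 2
    have h2 : |y + a * w| ^ (2 * n) ≤ 2 ^ (2 * n - 1) * (|y| ^ (2 * n) + |a * w| ^ (2 * n)) :=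
      (pow_le_pow_left₀ (abs_nonneg _) (abs_add_le _ _) _).trans
        (add_pow_le (abs_nonneg _) (abs_nonneg _) _)
    have h3 : |y| ^ (2 * n) = y ^ (2 * n) := by rw [pow_mul, sq_abs, ← pow_mul]
    have h4 : |a * w| ^ (2 * n) = (a ^ 2) ^ n * w ^ (2 * n) := by
      rw [pow_mul, sq_abs, mul_pow, mul_pow, ← pow_mul w]
    rw [h3, h4] at h2
    calc _ ≤ (L * |y + a * w| ^ n) ^ 2 := h1
      _ = L ^ 2 * |y + a * w| ^ (2 * n) := by rw [mul_pow, ← pow_mul, mul_comm n 2]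
      _ ≤ _ := by gcongr
  have h := key w₁
  have h' := key w₂
  nlinarith [sq_nonneg ((u (y + a * w₁) - u 0) + (u (y + a * w₂) - u 0))]

lemma integrable_pow_gaussianReal (v : NNReal) (m : ℕ) :
    Integrable (fun x : ℝ => x ^ m) (gaussianReal 0 v) := by
  have h := (memLp_id_gaussianReal (μ := 0) (v := v) (m : NNReal)).integrable_norm_pow'
  refine h.mono' (by fun_prop) (.of_forall fun x => ?_)
  simp

lemma integral_pow_gaussianReal (v : NNReal) (n : ℕ) :
    ∫ x, x ^ (2 * n) ∂(gaussianReal 0 v) =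
      (v : ℝ) ^ n * ∫ x, x ^ (2 * n) ∂(gaussianReal 0 1) := by
  have h : gaussianReal 0 v = (gaussianReal 0 1).map (fun x => Real.sqrt v * x) := by
    rw [gaussianReal_map_const_mul]
    congr 1
    · simp
    · ext; simp
  rw [h, integral_map (by fun_prop) (by fun_prop), ← integral_const_mul]
  congr 1 with x
  rw [mul_pow, pow_mul (Real.sqrt v), Real.sq_sqrt v.coe_nonneg]

/-- Cauchy-Schwarz against the constant function `1`. -/
lemma lintegral_sq_le {α : Type*} [MeasurableSpace α] (μ : Measure α) {f : α → ENNReal}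
    (hf : AEMeasurable f μ) : (∫⁻ x, f x ∂μ) ^ 2 ≤ μ univ * ∫⁻ x, f x ^ 2 ∂μ := by
  have h := ENNReal.lintegral_mul_le_Lp_mul_Lq μ Real.HolderConjugate.two_two
    (aemeasurable_const (b := (1 : ENNReal))) hf
  have h2 := pow_le_pow_left' h 2
  simp only [Pi.mul_apply, one_mul, ENNReal.one_rpow, lintegral_one, mul_pow] at h2
  have e : ∀ x : ENNReal, (x ^ (2⁻¹ : ℝ)) ^ 2 = x := fun x => by
    rw [← ENNReal.rpow_natCast, ← ENNReal.rpow_mul]; norm_num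
  simpa [e] using h2

/-- A uniform bound `B` on the second moment of `D τ`, `0 < τ ≤ t`, gives the bound `t² B` on the
second moment of the time integral. -/
lemma second_moment_integral_le {Ω : Type*} [MeasurableSpace Ω] (P : Measure Ω)
    [IsProbabilityMeasure P] {D : ℝ → Ω → ℝ} (hD : Measurable (fun p : ℝ × Ω => D p.1 p.2))
    {t B : ℝ} (ht : 0 < t) (hB : 0 ≤ B)
    (h : ∀ τ ∈ Ioc (0 : ℝ) t, ∫⁻ ω, ‖D τ ω‖ₑ ^ 2 ∂P ≤ ENNReal.ofReal B) :
    ∫ ω, (∫ τ in (0:ℝ)..t, D τ ω) ^ 2 ∂P ≤ t ^ 2 * B := by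
  have hvol : (volume.restrict (Ioc 0 t)) univ = ENNReal.ofReal t := by simp
  have hfin : ‖∫ ω, (∫ τ in (0:ℝ)..t, D τ ω) ^ 2 ∂P‖ₑ ≤ ENNReal.ofReal (t ^ 2 * B) :=
    calc ‖∫ ω, (∫ τ in (0:ℝ)..t, D τ ω) ^ 2 ∂P‖ₑ
        ≤ ∫⁻ ω, ‖(∫ τ in (0:ℝ)..t, D τ ω) ^ 2‖ₑ ∂P := enorm_integral_le_lintegral_enorm _
      _ ≤ ∫⁻ ω, ENNReal.ofReal t * (∫⁻ τ in Ioc 0 t, ‖D τ ω‖ₑ ^ 2) ∂P := by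
          refine lintegral_mono fun ω => ?_
          rw [enorm_pow, intervalIntegral.integral_of_le ht.le, ← hvol]
          refine (pow_le_pow_left' (enorm_integral_le_lintegral_enorm _) 2).trans
            (lintegral_sq_le _ ?_)
          exact (hD.comp (measurable_id.prodMk measurable_const)).enorm.aemeasurable
      _ = ENNReal.ofReal t * ∫⁻ τ in Ioc 0 t, ∫⁻ ω, ‖D τ ω‖ₑ ^ 2 ∂P := by
          rw [lintegral_const_mul' _ _ ENNReal.ofReal_ne_top, lintegral_lintegral_swap]
          exact ((hD.comp measurable_swap).enorm.pow_const 2).aemeasurable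
      _ ≤ ENNReal.ofReal t * ∫⁻ τ in Ioc 0 t, ENNReal.ofReal B := by
          gcongr 1
          exact setLIntegral_mono measurable_const h
      _ = ENNReal.ofReal (t ^ 2 * B) := by
          rw [lintegral_const, hvol, ← ENNReal.ofReal_mul hB, ← ENNReal.ofReal_mul ht.le]
          congr 1; ring
  have h0 : 0 ≤ ∫ ω, (∫ τ in (0:ℝ)..t, D τ ω) ^ 2 ∂P := integral_nonneg fun ω => sq_nonneg _
  rw [Real.enorm_of_nonneg h0] at hfin
  exact (ENNReal.ofReal_le_ofReal_iff (by positivity)).1 hfin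

/-- Two-point dispersion bound near a critical point of order `n`: if
`|u(z) - u(0)| ≤ L|z|ⁿ`, `|y| ≤ 2κ^{1/(n+2)}`, and `W¹_τ, W²_τ` are centered Gaussians of
variance `t - τ`, then
`E|∫₀ᵗ (u(y+√(2κ)W¹_τ) - u(y+√(2κ)W²_τ)) dτ|² ≤ C((κ^{n/(n+2)}t)² + (κ^{n/(n+2)}t)^{n+2})`. -/
theorem two_point_dispersion_regular (n : ℕ) (hn : 1 ≤ n) (L : ℝ) (hL : 0 < L) :
    ∃ C : ℝ, 0 < C ∧
      ∀ u : ℝ → ℝ, Measurable u → (∀ z : ℝ, |u z - u 0| ≤ L * |z| ^ n) →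
      ∀ t κ y : ℝ, 0 < t → κ ∈ Ioo (0:ℝ) 1 → |y| ≤ 2 * κ ^ ((1 : ℝ) / (n + 2)) →
      ∀ (Ω : Type) (_ : MeasurableSpace Ω) (P : Measure Ω), IsProbabilityMeasure P →
      ∀ W1 W2 : ℝ → Ω → ℝ,
        Measurable (fun p : ℝ × Ω => W1 p.1 p.2) →
        Measurable (fun p : ℝ × Ω => W2 p.1 p.2) →
        (∀ τ ∈ Icc (0:ℝ) t,
          Measure.map (W1 τ) P = gaussianReal 0 (Real.toNNReal (t - τ))) →
        (∀ τ ∈ Icc (0:ℝ) t,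
          Measure.map (W2 τ) P = gaussianReal 0 (Real.toNNReal (t - τ))) →
        (∫ ω, (∫ τ in (0:ℝ)..t,
            (u (y + Real.sqrt (2 * κ) * W1 τ ω) - u (y + Real.sqrt (2 * κ) * W2 τ ω))) ^ 2 ∂P)
          ≤ C * ((κ ^ ((n : ℝ) / (n + 2)) * t) ^ 2 +
              (κ ^ ((n : ℝ) / (n + 2)) * t) ^ (n + 2)) := by
  set M : ℝ := ∫ x, x ^ (2 * n) ∂(gaussianReal 0 1) with hM
  have hM0 : 0 ≤ M := integral_nonneg fun x => by rw [pow_mul]; positivity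
  refine ⟨4 * L ^ 2 * 2 ^ (2 * n - 1) * (4 ^ n + 2 ^ n * M), by positivity, ?_⟩
  intro u hum hu t κ y ht hκ hy Ω _ P hP W1 W2 hW1 hW2 hG1 hG2
  have hκ0 : 0 < κ := hκ.1
  set q : ℝ := κ ^ ((n : ℝ) / (n + 2)) with hq
  have hq0 : 0 ≤ q := Real.rpow_nonneg hκ0.le _
  have hqn : q ^ (n + 2) = κ ^ n := by
    rw [hq, ← Real.rpow_natCast, ← Real.rpow_mul hκ0.le, ← Real.rpow_natCast κ n]
    congr 1
    push_cast
    field_simp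
  have hyn : y ^ (2 * n) ≤ 4 ^ n * q ^ 2 := by
    have h1 : (κ ^ ((1 : ℝ) / (n + 2))) ^ n = q := by
      rw [hq, ← Real.rpow_natCast, ← Real.rpow_mul hκ0.le]
      congr 1
      ring
    calc y ^ (2 * n) = |y| ^ (2 * n) := by rw [pow_mul, pow_mul, sq_abs]
      _ ≤ (2 * κ ^ ((1 : ℝ) / (n + 2))) ^ (2 * n) := pow_le_pow_left₀ (abs_nonneg _) hy _
      _ = 4 ^ n * q ^ 2 := by
          rw [mul_pow, ← h1, ← pow_mul, mul_comm n 2, pow_mul 2 2 n]; norm_num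
  set a : ℝ := Real.sqrt (2 * κ) with ha
  have ha2 : a ^ 2 = 2 * κ := Real.sq_sqrt (by positivity)
  set c : ℝ := 2 * L ^ 2 * 2 ^ (2 * n - 1) with hc
  have hc0 : 0 ≤ c := by positivity
  have hy0 : 0 ≤ y ^ (2 * n) := by rw [pow_mul]; positivity
  set B : ℝ := c * (2 * y ^ (2 * n) + (2 * κ) ^ n * (2 * (t ^ n * M))) with hB
  have hB0 : 0 ≤ B := by positivity
  have moment : ∀ W : ℝ → Ω → ℝ, Measurable (fun p : ℝ × Ω => W p.1 p.2) →
      (∀ τ ∈ Icc (0:ℝ) t, Measure.map (W τ) P = gaussianReal 0 (Real.toNNReal (t - τ))) →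
      ∀ τ ∈ Ioc (0:ℝ) t, Integrable (fun ω => W τ ω ^ (2 * n)) P ∧
        ∫ ω, W τ ω ^ (2 * n) ∂P ≤ t ^ n * M := by
    intro W hW hG τ hτ
    have hm : Measurable (W τ) := hW.comp (measurable_const.prodMk measurable_id)
    have hg := hG τ ⟨hτ.1.le, hτ.2⟩
    have hi := integrable_pow_gaussianReal (Real.toNNReal (t - τ)) (2 * n)
    have he := integral_pow_gaussianReal (Real.toNNReal (t - τ)) n
    rw [← hg] at hi he
    rw [integral_map hm.aemeasurable (by fun_prop)] at he
    refine ⟨hi.comp_measurable hm, ?_⟩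
    rw [he, Real.coe_toNNReal _ (sub_nonneg.2 hτ.2)]
    have : t - τ ≤ t := by linarith [hτ.1]
    have : 0 ≤ t - τ := sub_nonneg.2 hτ.2
    gcongr
  have hD : Measurable (fun p : ℝ × Ω => u (y + a * W1 p.1 p.2) - u (y + a * W2 p.1 p.2)) :=
    (hum.comp ((hW1.const_mul a).const_add y)).sub (hum.comp ((hW2.const_mul a).const_add y))
  have main := second_moment_integral_le P
    (D := fun τ ω => u (y + a * W1 τ ω) - u (y + a * W2 τ ω)) hD ht hB0 ?_
  · refine main.trans ?_
    have e : t ^ 2 * B = 2 * c * (t ^ 2 * y ^ (2 * n) + 2 ^ n * M * (q * t) ^ (n + 2)) := by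
      rw [hB, mul_pow q, hqn, mul_pow]; ring
    have e2 : t ^ 2 * y ^ (2 * n) ≤ 4 ^ n * (q * t) ^ 2 := by
      calc t ^ 2 * y ^ (2 * n) ≤ t ^ 2 * (4 ^ n * q ^ 2) := by gcongr
        _ = _ := by ring
    have h4 : 0 ≤ 2 ^ n * M * (q * t) ^ 2 := by positivity
    have h5 : 0 ≤ 4 ^ n * (q * t) ^ (n + 2) := by positivity
    calc t ^ 2 * B ≤ 2 * c * ((4 ^ n + 2 ^ n * M) * ((q * t) ^ 2 + (q * t) ^ (n + 2))) := by
          rw [e]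
          gcongr
          linarith
      _ = _ := by rw [hc]; ring
  · intro τ hτ
    obtain ⟨i1, m1⟩ := moment W1 hW1 hG1 τ hτ
    obtain ⟨i2, m2⟩ := moment W2 hW2 hG2 τ hτ
    have hi : Integrable (fun ω => c * (2 * y ^ (2 * n) +
        (2 * κ) ^ n * (W1 τ ω ^ (2 * n) + W2 τ ω ^ (2 * n)))) P :=
      ((integrable_const _).add ((i1.add i2).const_mul _)).const_mul _
    have hs : Integrable (fun ω => (2 * κ) ^ n * (W1 τ ω ^ (2 * n) + W2 τ ω ^ (2 * n))) P :=
      (i1.add i2).const_mul _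
    have hpt : ∀ ω, (u (y + a * W1 τ ω) - u (y + a * W2 τ ω)) ^ 2 ≤ c * (2 * y ^ (2 * n) +
        (2 * κ) ^ n * (W1 τ ω ^ (2 * n) + W2 τ ω ^ (2 * n))) := fun ω => by
      rw [← ha2]; exact sq_increment_le hu y a _ _
    calc ∫⁻ ω, ‖u (y + a * W1 τ ω) - u (y + a * W2 τ ω)‖ₑ ^ 2 ∂P
        ≤ ∫⁻ ω, ENNReal.ofReal (c * (2 * y ^ (2 * n) +
            (2 * κ) ^ n * (W1 τ ω ^ (2 * n) + W2 τ ω ^ (2 * n)))) ∂P := by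
          refine lintegral_mono fun ω => ?_
          rw [← enorm_pow, Real.enorm_of_nonneg (sq_nonneg _)]
          exact ENNReal.ofReal_le_ofReal (hpt ω)
      _ = ENNReal.ofReal (∫ ω, c * (2 * y ^ (2 * n) +
            (2 * κ) ^ n * (W1 τ ω ^ (2 * n) + W2 τ ω ^ (2 * n))) ∂P) :=
          (ofReal_integral_eq_lintegral_ofReal hi
            (.of_forall fun ω => (sq_nonneg _).trans (hpt ω))).symm
      _ ≤ ENNReal.ofReal B := by
          refine ENNReal.ofReal_le_ofReal ?_
          rw [integral_const_mul, integral_add (integrable_const _) hs,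
            integral_const_mul ((2 * κ) ^ n), integral_add i1 i2, hB]
          simp only [integral_const, probReal_univ, one_smul]
          gcongr
          linarith
end

section
/- Let α ∈ (0,1], c_H > 0, and let u : ℝ → ℝ be a function with |u(z) − u(z')| ≤ c_H |z − z'|^α for all z, z' ∈ ℝ. Let t > 0, κ ∈ (0,1), and y ∈ ℝ. Let (Ω, F, P) be a probability space and let W¹, W² : [0,t] × Ω → ℝ be jointly measurable processes such that for each τ ∈ [0,t] and each i ∈ {1,2}, the random variable Wⁱ_τ is Gaussian with mean 0 and variance t − τ. Then there is a constant C depending only on α such that E | ∫₀ᵗ ( u(y + √(2κ) W¹_τ) − u(y + √(2κ) W²_τ) ) dτ |² ≤ C c_H² κ^α t^{α+2}. -/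
open MeasureTheory ProbabilityTheory Set

/-!
Cauchy–Schwarz in time bounds the squared time integral by `t ∫₀ᵗ D²`, where `D` is the drift
difference, and Tonelli moves the expectation inside. Instead of Jensen's inequality, the exponent
`α` is removed pointwise: `x ^ α ≤ s ^ α * (1 + x / s)` with `x = 2κ (W¹ - W²)²` and `s = 2κt`
(`rpow_le_scale`). This leaves only Gaussian second moments (`lintegral_sq_of_map_gaussian`), each
at most `t`, and yields the constant `C = 5 * 2 ^ α`. Everything is done with `ℝ≥0∞`-valued
integrals, so no integrability has to be established.
-/

/-- A linear substitute for the concave function `x ↦ x ^ α`, exact in scaling by `s`. -/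
lemma rpow_le_scale {α x s : ℝ} (h0 : 0 < α) (h1 : α ≤ 1) (hx : 0 ≤ x) (hs : 0 < s) :
    x ^ α ≤ s ^ α * (1 + x / s) := by
  have hq : 0 ≤ x / s := by positivity
  have h : x = s * (x / s) := by field_simp
  have hle : (x / s) ^ α ≤ 1 + x / s := by
    rcases le_total (x / s) 1 with h' | h'
    · have := Real.rpow_le_one hq h' h0.le
      linarith
    · have := Real.rpow_le_rpow_of_exponent_le h' h1
      rw [Real.rpow_one] at this
      linarith
  calc x ^ α = s ^ α * (x / s) ^ α := by
        conv_lhs => rw [h]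
        exact Real.mul_rpow hs.le hq
    _ ≤ _ := by gcongr

lemma continuous_of_holder {α c : ℝ} (h0 : 0 < α) {u : ℝ → ℝ}
    (hu : ∀ z z' : ℝ, |u z - u z'| ≤ c * |z - z'| ^ α) : Continuous u := by
  rw [continuous_iff_continuousAt]
  intro z'
  rw [ContinuousAt, tendsto_iff_dist_tendsto_zero]
  refine squeeze_zero (fun _ => dist_nonneg) (fun z => hu z z') ?_
  have hc : Continuous fun z : ℝ => c * |z - z'| ^ α :=
    continuous_const.mul ((by fun_prop : Continuous fun z : ℝ => |z - z'|).rpow_const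
      fun _ => Or.inr h0.le)
  simpa [Real.zero_rpow h0.ne'] using hc.tendsto z'

lemma lintegral_sq_of_map_gaussian {Ω : Type} [MeasurableSpace Ω] {P : Measure Ω} {X : Ω → ℝ}
    (hX : Measurable X) {v : NNReal} (h : Measure.map X P = gaussianReal 0 v) :
    ∫⁻ ω, ENNReal.ofReal (X ω ^ 2) ∂P = v := by
  have hm : Measurable fun x : ℝ => ENNReal.ofReal (x ^ 2) := by fun_prop
  rw [← lintegral_map hm hX, h, ← ofReal_integral_eq_lintegral_ofReal]
  · have hv : Var[id; gaussianReal 0 v] = v := variance_id_gaussianReal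
    rw [variance_of_integral_eq_zero aemeasurable_id (by simp)] at hv
    simp only [id] at hv
    rw [hv]
    simp
  · exact (memLp_id_gaussianReal (μ := 0) (v := v) 2).integrable_sq
  · exact Filter.Eventually.of_forall fun x => sq_nonneg x

lemma sq_lintegral_le {β : Type*} [MeasurableSpace β] (μ : Measure β) {f : β → ENNReal}
    (hf : Measurable f) : (∫⁻ x, f x ∂μ) ^ 2 ≤ μ univ * ∫⁻ x, f x ^ 2 ∂μ := by
  have h := ENNReal.lintegral_mul_le_Lp_mul_Lq μ Real.HolderConjugate.two_two
    (f := fun _ => 1) (g := f) aemeasurable_const hf.aemeasurable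
  simp only [Pi.mul_apply, one_mul, ENNReal.rpow_two, one_pow, lintegral_one] at h
  have hs : ∀ x : ENNReal, (x ^ (1 / 2 : ℝ)) ^ 2 = x := fun x => by
    rw [← ENNReal.rpow_two, ← ENNReal.rpow_mul]; norm_num
  calc _ ≤ _ := pow_le_pow_left' h 2
    _ = _ := by rw [mul_pow, hs, hs]

/-- The Hölder bound with the exponent removed: only second moments of the two points remain. -/
lemma sq_diff_le {α c t κ y a b : ℝ} (h0 : 0 < α) (h1 : α ≤ 1)
    {u : ℝ → ℝ} (hu : ∀ z z' : ℝ, |u z - u z'| ≤ c * |z - z'| ^ α) (ht : 0 < t) (hκ : 0 < κ) :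
    (u (y + Real.sqrt (2 * κ) * a) - u (y + Real.sqrt (2 * κ) * b)) ^ 2
      ≤ c ^ 2 * (2 * κ * t) ^ α * (1 + 2 / t * a ^ 2 + 2 / t * b ^ 2) := by
  set d := y + Real.sqrt (2 * κ) * a - (y + Real.sqrt (2 * κ) * b) with hd
  have hd2 : d ^ 2 = 2 * κ * (a - b) ^ 2 := by
    have : d = Real.sqrt (2 * κ) * (a - b) := by rw [hd]; ring
    rw [this, mul_pow, Real.sq_sqrt (by positivity)]
  have hpow : (|d| ^ α) ^ 2 = (d ^ 2) ^ α := by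
    rw [← sq_abs d, ← Real.rpow_natCast, ← Real.rpow_natCast, ← Real.rpow_mul (abs_nonneg d),
      ← Real.rpow_mul (abs_nonneg d), mul_comm]
  calc _ = |u (y + Real.sqrt (2 * κ) * a) - u (y + Real.sqrt (2 * κ) * b)| ^ 2 := (sq_abs _).symm
    _ ≤ (c * |d| ^ α) ^ 2 := by gcongr; exact hu _ _
    _ = c ^ 2 * (d ^ 2) ^ α := by rw [mul_pow, hpow]
    _ ≤ c ^ 2 * ((2 * κ * t) ^ α * (1 + d ^ 2 / (2 * κ * t))) := by
        gcongr
        exact rpow_le_scale h0 h1 (sq_nonneg d) (by positivity)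
    _ = c ^ 2 * (2 * κ * t) ^ α * (1 + (a - b) ^ 2 / t) := by
        rw [hd2, mul_div_mul_left _ _ (by positivity)]; ring
    _ ≤ _ := by
        have : (a - b) ^ 2 / t ≤ 2 / t * a ^ 2 + 2 / t * b ^ 2 := by
          rw [div_le_iff₀ ht]
          have : (2 / t * a ^ 2 + 2 / t * b ^ 2) * t = 2 * a ^ 2 + 2 * b ^ 2 := by field_simp
          rw [this]
          nlinarith [sq_nonneg (a + b)]
        rw [add_assoc]
        gcongr

/-- Two-point dispersion bound for a `C^α` (Hölder, `0 < α ≤ 1`) drift: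
if `|u(z) - u(z')| ≤ c_H |z-z'|^α` and `W¹_τ, W²_τ` are centered Gaussians of variance
`t - τ`, then `E|∫₀ᵗ (u(y+√(2κ)W¹_τ) - u(y+√(2κ)W²_τ)) dτ|² ≤ C c_H² κ^α t^{α+2}`. -/
theorem two_point_dispersion_holder (α : ℝ) (hα : α ∈ Ioc (0:ℝ) 1) :
    ∃ C : ℝ, 0 < C ∧
      ∀ (c_H : ℝ), 0 < c_H →
      ∀ u : ℝ → ℝ, (∀ z z' : ℝ, |u z - u z'| ≤ c_H * |z - z'| ^ α) →
      ∀ t κ y : ℝ, 0 < t → κ ∈ Ioo (0:ℝ) 1 →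
      ∀ (Ω : Type) (_ : MeasurableSpace Ω) (P : Measure Ω), IsProbabilityMeasure P →
      ∀ W1 W2 : ℝ → Ω → ℝ,
        Measurable (fun p : ℝ × Ω => W1 p.1 p.2) →
        Measurable (fun p : ℝ × Ω => W2 p.1 p.2) →
        (∀ τ ∈ Icc (0:ℝ) t,
          Measure.map (W1 τ) P = gaussianReal 0 (Real.toNNReal (t - τ))) →
        (∀ τ ∈ Icc (0:ℝ) t,
          Measure.map (W2 τ) P = gaussianReal 0 (Real.toNNReal (t - τ))) →
        (∫ ω, (∫ τ in (0:ℝ)..t,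
            (u (y + Real.sqrt (2 * κ) * W1 τ ω) - u (y + Real.sqrt (2 * κ) * W2 τ ω))) ^ 2 ∂P)
          ≤ C * c_H ^ 2 * κ ^ α * t ^ (α + 2) := by
  obtain ⟨h0, h1⟩ := hα
  refine ⟨5 * 2 ^ α, by positivity, ?_⟩
  intro c _ u hu t κ y ht ⟨hκ, _⟩ Ω _ P _ W1 W2 hW1 hW2 hg1 hg2
  have huc : Measurable u := (continuous_of_holder h0 hu).measurable
  set D : ℝ → Ω → ℝ := fun τ ω =>
    u (y + Real.sqrt (2 * κ) * W1 τ ω) - u (y + Real.sqrt (2 * κ) * W2 τ ω) with hD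
  have hDm : Measurable fun p : ℝ × Ω => D p.1 p.2 :=
    (huc.comp (measurable_const.add (measurable_const.mul hW1))).sub
      (huc.comp (measurable_const.add (measurable_const.mul hW2)))
  set K : ℝ := c ^ 2 * (2 * κ * t) ^ α with hK
  have hK0 : 0 ≤ K := by positivity
  have hmoment : ∀ τ ∈ Icc (0:ℝ) t, ∀ W : ℝ → Ω → ℝ, Measurable (W τ) →
      Measure.map (W τ) P = gaussianReal 0 (Real.toNNReal (t - τ)) →
      ∫⁻ ω, ENNReal.ofReal (2 / t * W τ ω ^ 2) ∂P ≤ ENNReal.ofReal 2 := by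
    intro τ hτ W hm hW
    simp_rw [ENNReal.ofReal_mul (show 0 ≤ 2 / t by positivity)]
    rw [lintegral_const_mul _ (by fun_prop), lintegral_sq_of_map_gaussian hm hW,
      ← ENNReal.ofReal, ← ENNReal.ofReal_mul (by positivity)]
    apply ENNReal.ofReal_le_ofReal
    calc 2 / t * (t - τ) ≤ 2 / t * t := by gcongr; linarith [hτ.1]
      _ = 2 := by field_simp
  have hslice : ∀ τ ∈ Ioc (0:ℝ) t, ∫⁻ ω, ‖D τ ω‖ₑ ^ 2 ∂P ≤ ENNReal.ofReal (K * 5) := by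
    intro τ hτ'
    have hτ : τ ∈ Icc (0:ℝ) t := ⟨hτ'.1.le, hτ'.2⟩
    have hm1 : Measurable (W1 τ) := hW1.comp measurable_prodMk_left
    have hm2 : Measurable (W2 τ) := hW2.comp measurable_prodMk_left
    calc ∫⁻ ω, ‖D τ ω‖ₑ ^ 2 ∂P
        ≤ ∫⁻ ω, ENNReal.ofReal K * (1 + ENNReal.ofReal (2 / t * W1 τ ω ^ 2)
            + ENNReal.ofReal (2 / t * W2 τ ω ^ 2)) ∂P := by
          refine lintegral_mono fun ω => ?_
          rw [← enorm_pow, Real.enorm_of_nonneg (sq_nonneg _), ← ENNReal.ofReal_one,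
            ← ENNReal.ofReal_add (by positivity) (by positivity),
            ← ENNReal.ofReal_add (by positivity) (by positivity), ← ENNReal.ofReal_mul hK0]
          exact ENNReal.ofReal_le_ofReal (sq_diff_le h0 h1 hu ht hκ)
      _ = ENNReal.ofReal K * (1 + ∫⁻ ω, ENNReal.ofReal (2 / t * W1 τ ω ^ 2) ∂P
            + ∫⁻ ω, ENNReal.ofReal (2 / t * W2 τ ω ^ 2) ∂P) := by
          rw [lintegral_const_mul _ (by fun_prop), lintegral_add_right _ (by fun_prop),
            lintegral_add_left measurable_const]
          simp
      _ ≤ ENNReal.ofReal K * (1 + ENNReal.ofReal 2 + ENNReal.ofReal 2) := by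
          gcongr
          · exact hmoment τ hτ W1 hm1 (hg1 τ hτ)
          · exact hmoment τ hτ W2 hm2 (hg2 τ hτ)
      _ = ENNReal.ofReal (K * 5) := by
          rw [ENNReal.ofReal_mul hK0]
          norm_num
  have hmain : ‖∫ ω, (∫ τ in (0:ℝ)..t, D τ ω) ^ 2 ∂P‖ₑ ≤ ENNReal.ofReal (t * (K * 5 * t)) := by
    calc _ ≤ ∫⁻ ω, ‖(∫ τ in (0:ℝ)..t, D τ ω) ^ 2‖ₑ ∂P := enorm_integral_le_lintegral_enorm _
      _ ≤ ∫⁻ ω, ENNReal.ofReal t * (∫⁻ τ in Ioc 0 t, ‖D τ ω‖ₑ ^ 2) ∂P := by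
          refine lintegral_mono fun ω => ?_
          have hm : Measurable fun τ => ‖D τ ω‖ₑ := (hDm.comp measurable_prodMk_right).enorm
          rw [enorm_pow, intervalIntegral.integral_of_le ht.le]
          refine (pow_le_pow_left' (enorm_integral_le_lintegral_enorm _) 2).trans ?_
          simpa using sq_lintegral_le (volume.restrict (Ioc 0 t)) hm
      _ = ENNReal.ofReal t * ∫⁻ ω, (∫⁻ τ in Ioc 0 t, ‖D τ ω‖ₑ ^ 2) ∂P :=
          lintegral_const_mul' _ _ ENNReal.ofReal_ne_top
      _ = ENNReal.ofReal t * ∫⁻ τ in Ioc 0 t, ∫⁻ ω, ‖D τ ω‖ₑ ^ 2 ∂P := by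
          congr 1
          exact lintegral_lintegral_swap (f := fun ω τ => ‖D τ ω‖ₑ ^ 2)
            ((hDm.comp measurable_swap).enorm.pow_const 2).aemeasurable
      _ ≤ ENNReal.ofReal t * ∫⁻ _ in Ioc 0 t, ENNReal.ofReal (K * 5) := by
          exact mul_le_mul_right (setLIntegral_mono measurable_const hslice) _
      _ = _ := by
          rw [setLIntegral_const, Real.volume_Ioc, sub_zero, ENNReal.ofReal_mul ht.le,
            ENNReal.ofReal_mul (show 0 ≤ K * 5 by positivity)]
  rw [Real.enorm_eq_ofReal_abs, ENNReal.ofReal_le_ofReal_iff (by positivity)] at hmain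
  calc _ ≤ t * (K * 5 * t) := (le_abs_self _).trans hmain
    _ = _ := by
      rw [hK, Real.mul_rpow (by positivity) ht.le, Real.mul_rpow (by positivity) hκ.le,
        Real.rpow_add ht, Real.rpow_two]
      ring
end

section
/- Let n ≥ 1 be an integer, δ ∈ {0,1}, L > 0, and let u : ℝ → ℝ be a continuous 2π-periodic function with |u(z) − u(0)| ≤ L |z|ⁿ for all z ∈ ℝ. Let κ ∈ (0,1), β = 1/(n+2), t > 0. Let (Ω, F, P) be a probability space carrying jointly measurable processes W¹, W² : [0,t] × Ω → ℝ and random variables B¹₀, B²₀ such that Wⁱ_τ is Gaussian with mean 0 and variance t − τ for each τ ∈ [0,t], and Bⁱ₀ is Gaussian with mean 0 and variance t, for i = 1,2. Define the random fields Xⁱ(x,y) = x + δ √(2κ) Bⁱ₀ − ∫₀ᵗ u(y + √(2κ) Wⁱ_τ) dτ and Yⁱ(x,y) = y + √(2κ) Wⁱ₀, and let ρ₀(x,y) = φ(y) sin x, where φ(y) = (κ^β − |y|)/κ^β for |y| ≤ κ^β and φ(y) = 0 otherwise. Then there is a constant C depending only on n, L and δ such that ∫₀^{2π} ∫_{−2κ^β}^{2κ^β}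 (1/4) E | ρ₀(X¹(x,y), Y¹(x,y)) − ρ₀(X²(x,y), Y²(x,y)) |² dy dx ≤ C ‖ρ₀‖²_{L²} ( κ^{n/(n+2)} t + (κ^{n/(n+2)} t)² + (κ^{n/(n+2)} t)^{n+2} ), where ‖ρ₀‖²_{L²} = ∫₀^{2π} ∫_ℝ ρ₀(x,y)² dy dx. -/
/-!
Write `h = κ^β`, so that `κ = h^{n+2}` and `κ^{n/(n+2)} = h^n`, and set `T = h^n t`; then
`κ t = h² T`. The datum is `1`-Lipschitz in `x` and `h⁻¹`-Lipschitz in `y`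
(`tentDatum_lipschitz`), so the squared difference along the two trajectories is at most six
times the sum of the squares of the two noises in `x`, the two noises in `y`, and the two drifts
`∫ (u(y + √(2κ) Wⁱ) - u(0)) dτ`; the common term `t u(0)` cancels.

The noise terms have expectation at most `2T` times the second Gaussian moment. For the drifts,
Cauchy–Schwarz in time, Fubini, and `|u(z) - u(0)| ≤ L|z|^n` reduce the second moment to
`t² L² E|y + √(2κ) W|^{2n}`; with `|y| ≤ 2h` this is a constant times `T² + T^{n+2}`
(`drift_bound`). The resulting bound is uniform in `x` and in `|y| ≤ 2h`. Integrating it over a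
region of area `8πh` and comparing with `‖ρ₀‖² = 2πh/3` (`tentDatumNormSq_eq`) concludes. No
measurability in `(x, y)` is needed for that last step, since the norm of a Bochner integral is
bounded by a uniform bound of its integrand times the measure of the domain.
-/

open MeasureTheory ProbabilityTheory Set Real

noncomputable section

/-- The tent function of height 1 and half-width `h`: `(h - |s|)/h` for `|s| ≤ h`,
`0` otherwise. -/
def tentLine (h : ℝ) (s : ℝ) : ℝ := if |s| ≤ h then (h - |s|) / h else 0

/-- The initial datum `ρ₀(x,y) = φ(y) sin x` with `φ` the tent of half-width `κ^β`. -/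
def tentDatum (κ β : ℝ) (x y : ℝ) : ℝ := tentLine (κ ^ β) y * Real.sin x

/-- The squared `L²` norm `∫₀^{2π} ∫_ℝ ρ₀(x,y)² dy dx` of the tent datum. -/
def tentDatumNormSq (κ β : ℝ) : ℝ :=
  ∫ x in (0:ℝ)..(2 * π), ∫ y : ℝ, (tentDatum κ β x y) ^ 2

/-- The `2k`-th moment of the standard Gaussian law. -/
def stdMoment (k : ℕ) : ℝ := ∫ x, x ^ (2 * k) ∂(gaussianReal 0 1)

lemma stdMoment_nonneg (k : ℕ) : 0 ≤ stdMoment k :=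
  integral_nonneg fun x => by rw [pow_mul]; positivity

lemma integrable_pow_gaussian (v : NNReal) (k : ℕ) :
    Integrable (fun x : ℝ => x ^ (2 * k)) (gaussianReal 0 v) := by
  have h := (memLp_id_gaussianReal (μ := 0) (v := v) ((2 * k : ℕ) : NNReal)).integrable_norm_pow'
  refine h.congr (Filter.Eventually.of_forall fun x => ?_)
  simp [pow_mul]

/-- Scaling: a centred Gaussian of variance `v` is `√v` times a standard one. -/
lemma moment_gaussian (v : NNReal) (k : ℕ) :
    ∫ x, x ^ (2 * k) ∂(gaussianReal 0 v) = (v : ℝ) ^ k * stdMoment k := by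
  have h : gaussianReal 0 v = (gaussianReal 0 1).map (fun x => √(v : ℝ) * x) := by
    rw [gaussianReal_map_const_mul]
    congr 1
    · simp
    · ext; simp
  rw [h, integral_map (by fun_prop) (by fun_prop), stdMoment, ← integral_const_mul]
  congr with x
  rw [mul_pow, pow_mul (√(v : ℝ)), Real.sq_sqrt v.coe_nonneg]

section
variable {Ω : Type} [MeasurableSpace Ω] {P : Measure Ω}

/-- `Measure.map` of a non-a.e.-measurable function is `0`, which is not a Gaussian law. -/
lemma aemeasurable_of_gaussian {Z : Ω → ℝ} {v : NNReal}
    (hZ : P.map Z = gaussianReal 0 v) : AEMeasurable Z P := by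
  by_contra h
  rw [Measure.map_of_not_aemeasurable h] at hZ
  exact IsProbabilityMeasure.ne_zero (gaussianReal 0 v) hZ.symm

lemma integrable_pow_of_gaussian {Z : Ω → ℝ} {v : NNReal}
    (hZ : P.map Z = gaussianReal 0 v) (k : ℕ) : Integrable (fun ω => Z ω ^ (2 * k)) P := by
  have h := integrable_pow_gaussian v k
  rw [← hZ] at h
  exact h.comp_aemeasurable (aemeasurable_of_gaussian hZ)

lemma moment_of_gaussian {Z : Ω → ℝ} {v : NNReal}
    (hZ : P.map Z = gaussianReal 0 v) (k : ℕ) :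
    ∫ ω, Z ω ^ (2 * k) ∂P = (v : ℝ) ^ k * stdMoment k := by
  rw [← moment_gaussian, ← hZ,
    integral_map (aemeasurable_of_gaussian hZ) (by fun_prop)]
end

lemma tentLine_eq_max {h : ℝ} (hh : 0 < h) (s : ℝ) : tentLine h s = max 0 (1 - |s| / h) := by
  unfold tentLine
  split_ifs with hs
  · rw [max_eq_right]
    · field_simp
    · have : |s| / h ≤ 1 := by rwa [div_le_one hh]
      linarith
  · rw [max_eq_left]
    have : 1 ≤ |s| / h := by rw [one_le_div hh]; linarith
    linarith

/-- The Lipschitz bound on the datum: slope `1` in `x`, slope `κ^{-β}` in `y`. -/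
lemma tentDatum_lipschitz {κ β : ℝ} (hκ : 0 < κ) (x y x' y' : ℝ) :
    |tentDatum κ β x y - tentDatum κ β x' y'| ≤ |x - x'| + |y - y'| / κ ^ β := by
  have hh : 0 < κ ^ β := Real.rpow_pos_of_pos hκ _
  set h := κ ^ β
  have h1 : |tentLine h y - tentLine h y'| ≤ |y - y'| / h := by
    rw [tentLine_eq_max hh, tentLine_eq_max hh, max_comm 0, max_comm 0]
    refine (abs_max_sub_max_le_abs _ _ _).trans ?_
    rw [show 1 - |y| / h - (1 - |y'| / h) = (|y'| - |y|) / h by ring, abs_div, abs_of_pos hh]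
    refine div_le_div_of_nonneg_right ?_ hh.le
    rw [abs_sub_comm y]
    exact abs_abs_sub_abs_le _ _
  have h2 : |tentLine h y'| ≤ 1 := by
    rw [tentLine_eq_max hh, abs_of_nonneg (le_max_left _ _)]
    have : 0 ≤ |y'| / h := by positivity
    exact max_le zero_le_one (by linarith)
  have h3 : |sin x - sin x'| ≤ |x - x'| := by
    simpa [Real.dist_eq] using Real.lipschitzWith_sin.dist_le_mul x x'
  calc |tentDatum κ β x y - tentDatum κ β x' y'|
      = |tentLine h y' * (sin x - sin x') + (tentLine h y - tentLine h y') * sin x| := by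
        unfold tentDatum; congr 1; ring
    _ ≤ |tentLine h y'| * |sin x - sin x'| + |tentLine h y - tentLine h y'| * |sin x| := by
        rw [← abs_mul, ← abs_mul]; exact abs_add_le _ _
    _ ≤ 1 * |x - x'| + (|y - y'| / h) * 1 := by
        gcongr
        exact Real.abs_sin_le_one x
    _ = _ := by ring

lemma integral_tentLine_sq {h : ℝ} (hh : 0 < h) : ∫ y, tentLine h y ^ 2 = 2 * h / 3 := by
  have e : ∀ y, tentLine h y ^ 2 = (fun r => (if r ≤ h then (h - r) / h else 0) ^ 2) |y| := by
    intro y; simp [tentLine]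
  simp_rw [e]
  rw [integral_comp_abs (f := fun r => (if r ≤ h then (h - r) / h else 0) ^ 2)]
  have e2 : ∀ r, (if r ≤ h then (h - r) / h else 0) ^ 2
      = (Iic h).indicator (fun r => ((h - r) / h) ^ 2) r := by
    intro r
    by_cases hr : r ≤ h <;> simp [hr]
  simp_rw [e2]
  rw [setIntegral_indicator measurableSet_Iic, Ioi_inter_Iic,
    ← intervalIntegral.integral_of_le hh.le]
  simp_rw [div_pow]
  rw [intervalIntegral.integral_div,
    intervalIntegral.integral_comp_sub_left (fun x => x ^ 2) h, integral_pow]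
  field_simp
  ring

lemma tentDatumNormSq_eq {κ β : ℝ} (hκ : 0 < κ) :
    tentDatumNormSq κ β = π * (2 * κ ^ β / 3) := by
  unfold tentDatumNormSq tentDatum
  simp_rw [mul_pow, integral_mul_const, integral_tentLine_sq (Real.rpow_pos_of_pos hκ β)]
  rw [intervalIntegral.integral_const_mul, integral_sin_sq]
  simp
  ring

/-- Cauchy–Schwarz in time, for bounded measurable integrands. -/
lemma sq_intervalIntegral_le {t : ℝ} (ht : 0 < t) {f : ℝ → ℝ} (hf : Measurable f) {K : ℝ}
    (hK : ∀ τ, |f τ| ≤ K) : (∫ τ in (0:ℝ)..t, f τ) ^ 2 ≤ t * ∫ τ in (0:ℝ)..t, f τ ^ 2 := by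
  have i1 : IntervalIntegrable f volume 0 t := by
    rw [intervalIntegrable_iff]
    exact Measure.integrableOn_of_bounded (M := K) (by simp) hf.aestronglyMeasurable
      (Filter.Eventually.of_forall hK)
  have i2 : IntervalIntegrable (fun τ => f τ ^ 2) volume 0 t := by
    rw [intervalIntegrable_iff]
    refine Measure.integrableOn_of_bounded (M := K ^ 2) (by simp)
      (hf.pow_const 2).aestronglyMeasurable (Filter.Eventually.of_forall fun τ => ?_)
    rw [norm_pow]
    exact pow_le_pow_left₀ (norm_nonneg _) (hK τ) 2
  set a := ∫ τ in (0:ℝ)..t, f τ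
  -- Cauchy–Schwarz as nonnegativity of the integral of the squared deviation from the mean.
  have h0 : 0 ≤ ∫ τ in (0:ℝ)..t, (f τ - a / t) ^ 2 :=
    intervalIntegral.integral_nonneg ht.le fun τ _ => sq_nonneg _
  have e : ∫ τ in (0:ℝ)..t, (f τ - a / t) ^ 2
      = (∫ τ in (0:ℝ)..t, f τ ^ 2) - (2 * (a / t)) * a + t * (a / t) ^ 2 := by
    simp_rw [show ∀ τ, (f τ - a / t) ^ 2 = f τ ^ 2 - (2 * (a / t)) * f τ + (a / t) ^ 2 by
      intro τ; ring]
    rw [intervalIntegral.integral_add (i2.sub (i1.const_mul _)) (by simp),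
      intervalIntegral.integral_sub i2 (i1.const_mul _), intervalIntegral.integral_const_mul]
    simp [a]
  rw [e] at h0
  have h1 := mul_nonneg ht.le h0
  have e2 : t * ((∫ τ in (0:ℝ)..t, f τ ^ 2) - (2 * (a / t)) * a + t * (a / t) ^ 2)
      = t * (∫ τ in (0:ℝ)..t, f τ ^ 2) - a ^ 2 := by
    field_simp; ring
  linarith

lemma exists_bound_of_periodic {u : ℝ → ℝ} (hu : Continuous u) (hp : ∀ y, u (y + 2 * π) = u y) :
    ∃ K : ℝ, ∀ z, |u z - u 0| ≤ K := by
  have hper : Function.Periodic (fun z => u z - u 0) (2 * π) := fun y => by simp [hp]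
  obtain ⟨K, hK⟩ := (hper.isBounded_of_continuous (by positivity) (by fun_prop)).exists_norm_le
  exact ⟨K, fun z => hK _ ⟨z, rfl⟩⟩

section
variable {Ω : Type} [MeasurableSpace Ω] {P : Measure Ω} [IsProbabilityMeasure P]

/-- Second-moment bound on the drift. Integrating `|u(z) - u(0)|² ≤ L²|z|^{2n}` along the path
costs at most `(2n)`-th moments of Gaussians of variance at most `t`. -/
lemma drift_bound {n : ℕ} {L : ℝ} {u : ℝ → ℝ} (hu : Continuous u)
    (hp : ∀ y, u (y + 2 * π) = u y) (hL : ∀ z : ℝ, |u z - u 0| ≤ L * |z| ^ n) {t : ℝ} (ht : 0 < t)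
    {W : ℝ → Ω → ℝ} (hW : Measurable (fun p : ℝ × Ω => W p.1 p.2))
    (hlaw : ∀ τ ∈ Icc (0:ℝ) t, P.map (W τ) = gaussianReal 0 (Real.toNNReal (t - τ)))
    (y s : ℝ) :
    Integrable (fun ω => ∫ τ in (0:ℝ)..t, (u (y + s * W τ ω) - u 0) ^ 2) P ∧
    ∫ ω, (∫ τ in (0:ℝ)..t, (u (y + s * W τ ω) - u 0) ^ 2) ∂P ≤
      t * (L ^ 2 * 4 ^ n * (y ^ (2 * n) + (s ^ 2 * t) ^ n * stdMoment n)) := by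
  obtain ⟨K, hK⟩ := exists_bound_of_periodic hu hp
  have hm : Measurable (fun p : ℝ × Ω => (u (y + s * W p.1 p.2) - u 0) ^ 2) := by
    have := hu.measurable
    fun_prop
  have hi : Integrable (fun p : Ω × ℝ => (u (y + s * W p.2 p.1) - u 0) ^ 2)
      (P.prod (volume.restrict (Ioc 0 t))) := by
    refine Integrable.of_bound (hm.comp measurable_swap).aestronglyMeasurable (K ^ 2)
      (Filter.Eventually.of_forall fun p => ?_)
    rw [norm_pow]
    exact pow_le_pow_left₀ (norm_nonneg _) (hK _) 2
  simp_rw [intervalIntegral.integral_of_le ht.le]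
  refine ⟨hi.integral_prod_left, ?_⟩
  rw [integral_integral_swap (f := fun ω τ => (u (y + s * W τ ω) - u 0) ^ 2) hi]
  set R := L ^ 2 * 4 ^ n * (y ^ (2 * n) + (s ^ 2 * t) ^ n * stdMoment n) with hR
  have key : ∀ τ ∈ Ioc (0:ℝ) t, ‖∫ ω, (u (y + s * W τ ω) - u 0) ^ 2 ∂P‖ ≤ R := by
    intro τ hτ
    have hτ' : τ ∈ Icc (0:ℝ) t := ⟨hτ.1.le, hτ.2⟩
    have ig := integrable_pow_of_gaussian (hlaw τ hτ') n
    have ie := moment_of_gaussian (hlaw τ hτ') n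
    rw [Real.coe_toNNReal _ (by linarith [hτ.2])] at ie
    rw [Real.norm_of_nonneg (integral_nonneg fun ω => sq_nonneg _)]
    have hpt : ∀ ω, (u (y + s * W τ ω) - u 0) ^ 2 ≤
        L ^ 2 * 4 ^ n * (y ^ (2 * n) + (s ^ 2) ^ n * W τ ω ^ (2 * n)) := by
      intro ω
      set w := s * W τ ω with hw
      have h1 : (u (y + w) - u 0) ^ 2 ≤ (L * |y + w| ^ n) ^ 2 := by
        rw [← sq_abs]; exact pow_le_pow_left₀ (abs_nonneg _) (hL _) 2
      have h2 : (y + w) ^ 2 ≤ 4 * max (y ^ 2) (w ^ 2) := by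
        have := le_max_left (y ^ 2) (w ^ 2)
        have := le_max_right (y ^ 2) (w ^ 2)
        nlinarith [sq_nonneg (y - w)]
      have h3 : (max (y ^ 2) (w ^ 2)) ^ n ≤ (y ^ 2) ^ n + (w ^ 2) ^ n := by
        rcases max_choice (y ^ 2) (w ^ 2) with h | h <;> rw [h]
        · have : 0 ≤ (w ^ 2) ^ n := by positivity
          linarith
        · have : 0 ≤ (y ^ 2) ^ n := by positivity
          linarith
      have h4 := (pow_le_pow_left₀ (sq_nonneg _) h2 n).trans_eq (mul_pow _ _ _)
      calc (u (y + w) - u 0) ^ 2 ≤ (L * |y + w| ^ n) ^ 2 := h1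
        _ = L ^ 2 * ((y + w) ^ 2) ^ n := by
          rw [mul_pow, ← pow_mul, mul_comm n 2, pow_mul, sq_abs]
        _ ≤ L ^ 2 * (4 ^ n * ((y ^ 2) ^ n + (w ^ 2) ^ n)) := by
          gcongr
          exact h4.trans (by gcongr)
        _ = _ := by rw [hw, mul_pow, mul_pow, pow_mul, pow_mul]; ring
    calc ∫ ω, (u (y + s * W τ ω) - u 0) ^ 2 ∂P
        ≤ ∫ ω, L ^ 2 * 4 ^ n * (y ^ (2 * n) + (s ^ 2) ^ n * W τ ω ^ (2 * n)) ∂P :=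
          integral_mono_of_nonneg (Filter.Eventually.of_forall fun ω => sq_nonneg _)
            (((integrable_const _).add (ig.const_mul _)).const_mul _)
            (Filter.Eventually.of_forall hpt)
      _ = L ^ 2 * 4 ^ n * (y ^ (2 * n) + (s ^ 2) ^ n * ((t - τ) ^ n * stdMoment n)) := by
          rw [integral_const_mul, integral_add (integrable_const _) (ig.const_mul _),
            integral_const_mul, ie]
          simp
      _ ≤ L ^ 2 * 4 ^ n * (y ^ (2 * n) + (s ^ 2) ^ n * (t ^ n * stdMoment n)) := by
          have := stdMoment_nonneg n
          have h0 : 0 ≤ t - τ := by linarith [hτ.2]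
          have h1 : t - τ ≤ t := by linarith [hτ.1]
          gcongr
      _ = R := by rw [hR, mul_pow]; ring
  rw [← intervalIntegral.integral_of_le ht.le]
  refine (le_abs_self _).trans ?_
  have := intervalIntegral.norm_integral_le_of_norm_le_const (a := 0) (b := t) (C := R)
    (f := fun τ => ∫ ω, (u (y + s * W τ ω) - u 0) ^ 2 ∂P) (by rwa [uIoc_of_le ht.le])
  rw [sub_zero, abs_of_pos ht] at this
  rw [mul_comm]
  exact this

/-- Splits off the deterministic part `t u(0)`, which is common to both trajectories. -/
lemma integral_drift_eq {u : ℝ → ℝ} (hu : Continuous u)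
    (hp : ∀ y, u (y + 2 * π) = u y) {t : ℝ}
    {W : ℝ → Ω → ℝ} (hW : Measurable (fun p : ℝ × Ω => W p.1 p.2)) (y s : ℝ) (ω : Ω) :
    ∫ τ in (0:ℝ)..t, u (y + s * W τ ω) =
      (∫ τ in (0:ℝ)..t, (u (y + s * W τ ω) - u 0)) + t * u 0 := by
  obtain ⟨K, hK⟩ := exists_bound_of_periodic hu hp
  have hm : Measurable (fun τ => u (y + s * W τ ω) - u 0) := by
    have := hu.measurable
    have h2 : Measurable (fun τ => W τ ω) := hW.comp measurable_prodMk_right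
    fun_prop
  have i1 : IntervalIntegrable (fun τ => u (y + s * W τ ω) - u 0) volume 0 t := by
    rw [intervalIntegrable_iff]
    exact Measure.integrableOn_of_bounded (M := K) (by simp) hm.aestronglyMeasurable
      (Filter.Eventually.of_forall fun τ => hK _)
  have := intervalIntegral.integral_add i1 (intervalIntegrable_const (c := u 0))
  simp only [sub_add_cancel, intervalIntegral.integral_const, sub_zero, smul_eq_mul] at this
  exact this

lemma sq_drift_le {u : ℝ → ℝ} (hu : Continuous u)
    (hp : ∀ y, u (y + 2 * π) = u y) {t : ℝ} (ht : 0 < t)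
    {W : ℝ → Ω → ℝ} (hW : Measurable (fun p : ℝ × Ω => W p.1 p.2)) (y s : ℝ) (ω : Ω) :
    (∫ τ in (0:ℝ)..t, (u (y + s * W τ ω) - u 0)) ^ 2 ≤
      t * ∫ τ in (0:ℝ)..t, (u (y + s * W τ ω) - u 0) ^ 2 := by
  obtain ⟨K, hK⟩ := exists_bound_of_periodic hu hp
  have hm : Measurable (fun τ => u (y + s * W τ ω) - u 0) := by
    have := hu.measurable
    have h2 : Measurable (fun τ => W τ ω) := hW.comp measurable_prodMk_right
    fun_prop
  exact sq_intervalIntegral_le ht hm fun τ => hK _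
end

/-- Contribution of the region `|y| ≤ 2κ^β`: the spatially-integrated
two-point variance of the tent datum sampled along explicit backward shear trajectories is
bounded by `C‖ρ₀‖²(κ^{n/(n+2)}t + (κ^{n/(n+2)}t)² + (κ^{n/(n+2)}t)^{n+2})`,
where `β = 1/(n+2)`. -/
theorem variance_bound_inner_region (n : ℕ) (hn : 1 ≤ n) (δ : ℝ) (hδ : δ = 0 ∨ δ = 1)
    (L : ℝ) (hL : 0 < L) :
    ∃ C : ℝ, 0 < C ∧
      ∀ u : ℝ → ℝ, Continuous u → (∀ y, u (y + 2 * π) = u y) →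
      (∀ z : ℝ, |u z - u 0| ≤ L * |z| ^ n) →
      ∀ κ t : ℝ, κ ∈ Ioo (0:ℝ) 1 → 0 < t →
      ∀ (Ω : Type) (_ : MeasurableSpace Ω) (P : Measure Ω), IsProbabilityMeasure P →
      ∀ (W1 W2 : ℝ → Ω → ℝ) (B1 B2 : Ω → ℝ),
        Measurable (fun p : ℝ × Ω => W1 p.1 p.2) →
        Measurable (fun p : ℝ × Ω => W2 p.1 p.2) →
        (∀ τ ∈ Icc (0:ℝ) t,
          Measure.map (W1 τ) P = gaussianReal 0 (Real.toNNReal (t - τ))) →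
        (∀ τ ∈ Icc (0:ℝ) t,
          Measure.map (W2 τ) P = gaussianReal 0 (Real.toNNReal (t - τ))) →
        Measure.map B1 P = gaussianReal 0 (Real.toNNReal t) →
        Measure.map B2 P = gaussianReal 0 (Real.toNNReal t) →
        ∀ X1 X2 Y1 Y2 : ℝ → ℝ → Ω → ℝ,
        (∀ x y ω, X1 x y ω = x + δ * Real.sqrt (2 * κ) * B1 ω -
            ∫ τ in (0:ℝ)..t, u (y + Real.sqrt (2 * κ) * W1 τ ω)) →
        (∀ x y ω, X2 x y ω = x + δ * Real.sqrt (2 * κ) * B2 ω -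
            ∫ τ in (0:ℝ)..t, u (y + Real.sqrt (2 * κ) * W2 τ ω)) →
        (∀ x y ω, Y1 x y ω = y + Real.sqrt (2 * κ) * W1 0 ω) →
        (∀ x y ω, Y2 x y ω = y + Real.sqrt (2 * κ) * W2 0 ω) →
        (∫ x in (0:ℝ)..(2 * π),
            ∫ y in (-(2 * κ ^ ((1:ℝ) / (n + 2))))..(2 * κ ^ ((1:ℝ) / (n + 2))),
              (1 / 4) * ∫ ω,
                (tentDatum κ ((1:ℝ) / (n + 2)) (X1 x y ω) (Y1 x y ω) -
                  tentDatum κ ((1:ℝ) / (n + 2)) (X2 x y ω) (Y2 x y ω)) ^ 2 ∂P)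
          ≤ C * tentDatumNormSq κ ((1:ℝ) / (n + 2)) *
              (κ ^ ((n : ℝ) / (n + 2)) * t + (κ ^ ((n : ℝ) / (n + 2)) * t) ^ 2 +
                (κ ^ ((n : ℝ) / (n + 2)) * t) ^ (n + 2)) := by
  have hM1 := stdMoment_nonneg 1
  have hMn := stdMoment_nonneg n
  set A : ℝ := L ^ 2 * 4 ^ n * (4 ^ n + 2 ^ n * stdMoment n) with hA
  have hA0 : 0 < A := by positivity
  refine ⟨3 * (6 * (8 * stdMoment 1 + 2 * A)), by positivity, ?_⟩
  intro u hu hp hLu κ t hκ ht Ω _ P _ W1 W2 B1 B2 hW1 hW2 lW1 lW2 lB1 lB2 X1 X2 Y1 Y2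
    hX1 hX2 hY1 hY2
  obtain ⟨hκ0, hκ1⟩ := hκ
  rw [tentDatumNormSq_eq hκ0]
  have hlip := tentDatum_lipschitz (β := (1:ℝ) / (n + 2)) hκ0
  set h : ℝ := κ ^ ((1:ℝ) / (n + 2)) with hh
  have hn2 : (n : ℝ) + 2 ≠ 0 := by positivity
  have hpos : 0 < h := Real.rpow_pos_of_pos hκ0 _
  have hle1 : h ≤ 1 := Real.rpow_le_one hκ0.le hκ1.le (by positivity)
  have hκh : κ = h ^ n * h ^ 2 := by
    rw [← pow_add, hh, ← Real.rpow_natCast, ← Real.rpow_mul hκ0.le]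
    push_cast
    rw [one_div_mul_cancel hn2, Real.rpow_one]
  have hhn : κ ^ ((n : ℝ) / (n + 2)) = h ^ n := by
    rw [hh, ← Real.rpow_natCast, ← Real.rpow_mul hκ0.le]
    congr 1; ring
  rw [hhn]
  set T : ℝ := h ^ n * t with hT
  have hT0 : 0 < T := by positivity
  have hκt : κ * t = h ^ 2 * T := by rw [hκh, hT]; ring
  set s : ℝ := √(2 * κ) with hs
  have hs2 : s ^ 2 = 2 * κ := Real.sq_sqrt (by positivity)
  set S : ℝ := T + T ^ 2 + T ^ (n + 2) with hS
  have hδ2 : δ ^ 2 ≤ 1 := by rcases hδ with h | h <;> simp [h]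
  have h0t : (0:ℝ) ∈ Icc (0:ℝ) t := ⟨le_rfl, ht.le⟩
  -- Variance `t` is the law of `Bⁱ` and of `Wⁱ` at time `0`.
  have second : ∀ {Z : Ω → ℝ}, P.map Z = gaussianReal 0 (Real.toNNReal t) →
      Integrable (fun ω => Z ω ^ 2) P ∧ ∫ ω, Z ω ^ 2 ∂P = t * stdMoment 1 := by
    intro Z hZ
    refine ⟨by simpa using integrable_pow_of_gaussian hZ 1, ?_⟩
    have := moment_of_gaussian hZ 1
    rwa [Real.coe_toNNReal _ ht.le, pow_one, mul_one] at this
  obtain ⟨iB1, eB1⟩ := second lB1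
  obtain ⟨iB2, eB2⟩ := second lB2
  obtain ⟨iW1, eW1⟩ := second (by simpa using lW1 0 h0t)
  obtain ⟨iW2, eW2⟩ := second (by simpa using lW2 0 h0t)
  -- The expectation is bounded uniformly in `x` and in `|y| ≤ 2h`.
  have key : ∀ x y : ℝ, |y| ≤ 2 * h →
      ∫ ω, (tentDatum κ ((1:ℝ) / (n + 2)) (X1 x y ω) (Y1 x y ω) -
        tentDatum κ ((1:ℝ) / (n + 2)) (X2 x y ω) (Y2 x y ω)) ^ 2 ∂P
      ≤ 6 * (8 * stdMoment 1 + 2 * A) * S := by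
    intro x y hy
    obtain ⟨iD1, eD1⟩ := drift_bound hu hp hLu ht hW1 lW1 y s
    obtain ⟨iD2, eD2⟩ := drift_bound hu hp hLu ht hW2 lW2 y s
    set D1 : Ω → ℝ := fun ω => ∫ τ in (0:ℝ)..t, (u (y + s * W1 τ ω) - u 0) ^ 2 with hD1
    set D2 : Ω → ℝ := fun ω => ∫ τ in (0:ℝ)..t, (u (y + s * W2 τ ω) - u 0) ^ 2 with hD2
    have hR : t * (t * (L ^ 2 * 4 ^ n * (y ^ (2 * n) + (s ^ 2 * t) ^ n * stdMoment n)))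
        ≤ A * (T ^ 2 + T ^ (n + 2)) := by
      have hy2 : y ^ (2 * n) ≤ 4 ^ n * (h ^ n) ^ 2 := by
        have : y ^ 2 ≤ 4 * h ^ 2 := by
          rw [← sq_abs]
          nlinarith [abs_nonneg y]
        calc y ^ (2 * n) = (y ^ 2) ^ n := pow_mul _ _ _
          _ ≤ (4 * h ^ 2) ^ n := pow_le_pow_left₀ (sq_nonneg _) this n
          _ = _ := by rw [mul_pow, ← pow_mul, ← pow_mul, mul_comm 2 n]
      have hst : (s ^ 2 * t) ^ n = 2 ^ n * (h ^ n) ^ 2 * T ^ n := by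
        rw [hs2, mul_assoc, hκt, mul_pow, mul_pow, ← pow_mul, ← pow_mul, mul_comm 2 n, mul_assoc]
      calc t * (t * (L ^ 2 * 4 ^ n * (y ^ (2 * n) + (s ^ 2 * t) ^ n * stdMoment n)))
          ≤ t * (t * (L ^ 2 * 4 ^ n * (4 ^ n * (h ^ n) ^ 2
              + 2 ^ n * (h ^ n) ^ 2 * T ^ n * stdMoment n))) := by
            rw [hst]; gcongr
        _ = L ^ 2 * 4 ^ n * (4 ^ n * T ^ 2 + 2 ^ n * stdMoment n * T ^ (n + 2)) := by
            rw [pow_add T n 2]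
            have : T ^ 2 = (h ^ n) ^ 2 * t ^ 2 := by rw [hT, mul_pow]
            rw [this]; ring
        _ ≤ A * (T ^ 2 + T ^ (n + 2)) := by
            rw [hA, mul_assoc (L ^ 2 * 4 ^ n)]
            gcongr
            have h1 : 0 ≤ (4:ℝ) ^ n * T ^ (n + 2) := by positivity
            have h2 : 0 ≤ 2 ^ n * stdMoment n * T ^ 2 := by positivity
            linarith
    -- `G` is an integrable majorant of the squared difference.
    set G : Ω → ℝ := fun ω => 6 * (δ ^ 2 * s ^ 2 * B1 ω ^ 2 + δ ^ 2 * s ^ 2 * B2 ω ^ 2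
      + s ^ 2 / h ^ 2 * W1 0 ω ^ 2 + s ^ 2 / h ^ 2 * W2 0 ω ^ 2 + t * D1 ω + t * D2 ω) with hG
    have j1 := iB1.const_mul (δ ^ 2 * s ^ 2)
    have j2 := iB2.const_mul (δ ^ 2 * s ^ 2)
    have j3 := iW1.const_mul (s ^ 2 / h ^ 2)
    have j4 := iW2.const_mul (s ^ 2 / h ^ 2)
    have j5 := iD1.const_mul t
    have j6 := iD2.const_mul t
    have k2 := j1.add j2
    have k3 := k2.add j3
    have k4 := k3.add j4
    have k5 := k4.add j5
    have k6 := k5.add j6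
    have iG : Integrable G P := k6.const_mul 6
    have eG : ∫ ω, G ω ∂P = 6 * (δ ^ 2 * s ^ 2 * (t * stdMoment 1)
        + δ ^ 2 * s ^ 2 * (t * stdMoment 1) + s ^ 2 / h ^ 2 * (t * stdMoment 1)
        + s ^ 2 / h ^ 2 * (t * stdMoment 1) + t * ∫ ω, D1 ω ∂P + t * ∫ ω, D2 ω ∂P) := by
      rw [hG, integral_const_mul]
      erw [integral_add k5 j6, integral_add k4 j5, integral_add k3 j4, integral_add k2 j3,
        integral_add j1 j2]
      simp only [integral_const_mul, eB1, eB2, eW1, eW2]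
    have hle : ∀ ω, (tentDatum κ ((1:ℝ) / (n + 2)) (X1 x y ω) (Y1 x y ω) -
        tentDatum κ ((1:ℝ) / (n + 2)) (X2 x y ω) (Y2 x y ω)) ^ 2 ≤ G ω := by
      intro ω
      have hl := hlip (X1 x y ω) (Y1 x y ω) (X2 x y ω) (Y2 x y ω)
      have d1 := sq_drift_le hu hp ht hW1 y s ω
      have d2 := sq_drift_le hu hp ht hW2 y s ω
      rw [hX1, hX2, hY1, hY2] at hl
      rw [hX1, hX2, hY1, hY2]
      rw [integral_drift_eq hu hp hW1, integral_drift_eq hu hp hW2] at hl ⊢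
      set a1 := ∫ τ in (0:ℝ)..t, (u (y + s * W1 τ ω) - u 0)
      set a2 := ∫ τ in (0:ℝ)..t, (u (y + s * W2 τ ω) - u 0)
      set ρ := tentDatum κ ((1:ℝ) / (n + 2)) (x + δ * s * B1 ω - (a1 + t * u 0))
          (y + s * W1 0 ω) - tentDatum κ ((1:ℝ) / (n + 2))
          (x + δ * s * B2 ω - (a2 + t * u 0)) (y + s * W2 0 ω)
      have e1 : x + δ * s * B1 ω - (a1 + t * u 0) - (x + δ * s * B2 ω - (a2 + t * u 0))
        = δ * s * B1 ω - δ * s * B2 ω - a1 + a2 := by ring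
      have e2 : |y + s * W1 0 ω - (y + s * W2 0 ω)| / h = |s / h * W1 0 ω - s / h * W2 0 ω| := by
        rw [← abs_of_pos hpos, ← abs_div, abs_of_pos hpos]
        congr 1; ring
      rw [e1, e2] at hl
      have hl2 : |ρ| ≤ |δ * s * B1 ω| + |δ * s * B2 ω| + |s / h * W1 0 ω| + |s / h * W2 0 ω|
          + |a1| + |a2| := by
        have t1 := abs_sub (s / h * W1 0 ω) (s / h * W2 0 ω)
        have t2 := abs_add_le (δ * s * B1 ω - δ * s * B2 ω - a1) a2
        have t3 := abs_sub (δ * s * B1 ω - δ * s * B2 ω) a1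
        have t4 := abs_sub (δ * s * B1 ω) (δ * s * B2 ω)
        linarith
      have six : ∀ a b c d e f : ℝ, (a + b + c + d + e + f) ^ 2 ≤
          6 * (a ^ 2 + b ^ 2 + c ^ 2 + d ^ 2 + e ^ 2 + f ^ 2) := by
        intro a b c d e f
        linarith [sq_nonneg (a - b), sq_nonneg (a - c), sq_nonneg (a - d), sq_nonneg (a - e),
          sq_nonneg (a - f), sq_nonneg (b - c), sq_nonneg (b - d), sq_nonneg (b - e),
          sq_nonneg (b - f), sq_nonneg (c - d), sq_nonneg (c - e), sq_nonneg (c - f),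
          sq_nonneg (d - e), sq_nonneg (d - f), sq_nonneg (e - f)]
      have hl3 := (pow_le_pow_left₀ (abs_nonneg _) hl2 2).trans (six _ _ _ _ _ _)
      simp only [sq_abs, mul_pow, div_pow] at hl3
      refine hl3.trans ?_
      simp only [hG, hD1, hD2]
      gcongr
    refine (integral_mono_of_nonneg (Filter.Eventually.of_forall fun ω => sq_nonneg _) iG
      (Filter.Eventually.of_forall hle)).trans ?_
    rw [eG]
    have b1 : δ ^ 2 * s ^ 2 * (t * stdMoment 1) ≤ 2 * T * stdMoment 1 := by
      have : s ^ 2 * t ≤ 2 * T := by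
        rw [hs2, mul_assoc, hκt]
        nlinarith [mul_le_mul_of_nonneg_right (pow_le_one₀ hpos.le hle1 : h ^ 2 ≤ 1) hT0.le]
      calc δ ^ 2 * s ^ 2 * (t * stdMoment 1) = δ ^ 2 * (s ^ 2 * t * stdMoment 1) := by ring
        _ ≤ 1 * (2 * T * stdMoment 1) := by gcongr
        _ = _ := one_mul _
    have b2 : s ^ 2 / h ^ 2 * (t * stdMoment 1) = 2 * T * stdMoment 1 := by
      have : s ^ 2 * t = h ^ 2 * (2 * T) := by rw [hs2, mul_assoc, hκt]; ring
      calc s ^ 2 / h ^ 2 * (t * stdMoment 1) = s ^ 2 * t / h ^ 2 * stdMoment 1 := by ring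
        _ = _ := by rw [this, mul_div_cancel_left₀ _ (by positivity)]
    have c1 := (mul_le_mul_of_nonneg_left eD1 ht.le).trans hR
    have c2 := (mul_le_mul_of_nonneg_left eD2 ht.le).trans hR
    have f1 : 0 ≤ stdMoment 1 * (T ^ 2 + T ^ (n + 2)) := by positivity
    have f2 : 0 ≤ A * T := by positivity
    rw [b2, hS]
    linarith
  set Q := 6 * (8 * stdMoment 1 + 2 * A) * S with hQ
  have inner : ∀ x : ℝ, ‖∫ y in (-(2 * h))..(2 * h), (1 / 4) * ∫ ω,
      (tentDatum κ ((1:ℝ) / (n + 2)) (X1 x y ω) (Y1 x y ω) -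
        tentDatum κ ((1:ℝ) / (n + 2)) (X2 x y ω) (Y2 x y ω)) ^ 2 ∂P‖ ≤ h * Q := by
    intro x
    refine (intervalIntegral.norm_integral_le_of_norm_le_const (C := Q / 4) ?_).trans_eq ?_
    · intro y hy
      rw [uIoc_of_le (by linarith)] at hy
      have := key x y (abs_le.2 ⟨hy.1.le, hy.2⟩)
      rw [Real.norm_of_nonneg
        (mul_nonneg (by norm_num) (integral_nonneg fun ω => sq_nonneg _))]
      linarith
    · rw [abs_of_pos (by linarith)]; ring
  refine (le_abs_self _).trans ((intervalIntegral.norm_integral_le_of_norm_le_const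
    (C := h * Q) fun x _ => inner x).trans_eq ?_)
  rw [sub_zero, abs_of_pos (by positivity), hQ]
  ring

end
end

section
/- Let n ≥ 1 be an integer, κ ∈ (0,1), β = 1/(n+2), t > 0. Let ρ₀(x,y) = φ(y) sin x, where φ(y) = (κ^β − |y|)/κ^β for |y| ≤ κ^β and φ(y) = 0 otherwise, extended to all x ∈ ℝ (2π-periodic in x), and write ‖ρ₀‖²_{L²} = ∫₀^{2π} ∫_ℝ ρ₀(x,y)² dy dx. Let (Ω, F, P) be a probability space, W₀ a Gaussian random variable with mean 0 and variance t, and (X, Y) : ([0,2π) × ℝ) × Ω → ℝ² a jointly measurable random field such that: (i) Y(x,y,ω) = y + √(2κ) W₀(ω) for all (x,y); and (ii) for P-almost every ω, the map (x,y) ↦ (X(x,y,ω) mod 2π, Y(x,y,ω)) preserves the product of Lebesgue measure on [0,2π) and Lebesgue measure on ℝ. Then there is a universal constant C such that ∫₀^{2π} ∫_{|y| ≥ 2κ^β} E[ ρ₀(X(x,y), Y(x,y))² ] dy dx ≤ C ‖ρ₀‖²_{L²} κ^{n/(n+2)} t. -/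
/-!
If `|y| ≥ 2h` with `h = κ^β` and `ρ₀(X, Y) ≠ 0`, then `|Y| ≤ h`, so the displacement satisfies
`√(2κ)|W₀| ≥ h`. This event depends on `ω` alone. On it, for almost every fixed `ω`, measure
preservation (together with the periodicity of `sin`) turns the integral of `ρ₀(X, Y)²` over the
cylinder into `‖ρ₀‖²`. Tonelli's theorem therefore bounds the left-hand side by
`P(√(2κ)|W₀| ≥ h) ‖ρ₀‖²`, and Chebyshev's inequality bounds the probability by
`2κt / h² = 2 κ^{n/(n+2)} t`. Hence `C = 2` works, and no appeal to the `L⁴` norm is needed.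

The estimate is carried out with `ℝ≥0∞`-valued integrals, so that Tonelli applies without
integrability side conditions.
-/

open MeasureTheory ProbabilityTheory Set Real

noncomputable section

/-- Reduction of `x` to the fundamental domain `[0, 2π)`. -/
def mod2piPos (x : ℝ) : ℝ := x - 2 * π * ⌊x / (2 * π)⌋

lemma measurable_tentLine (h : ℝ) : Measurable (tentLine h) := by
  unfold tentLine
  exact Measurable.ite (measurableSet_le (by fun_prop) (by fun_prop)) (by fun_prop) (by fun_prop)

lemma tentLine_eq_zero {h s : ℝ} (hs : h ≤ |s|) : tentLine h s = 0 := by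
  unfold tentLine
  split_ifs with H
  · rw [le_antisymm H hs]; simp
  · rfl

lemma abs_tentLine_le_one {h : ℝ} (hh : 0 < h) (s : ℝ) : |tentLine h s| ≤ 1 := by
  unfold tentLine
  split_ifs with H
  · rw [abs_of_nonneg (div_nonneg (by linarith) hh.le), div_le_one hh]
    linarith [abs_nonneg s]
  · simp

lemma integrable_tentLine_sq {h : ℝ} (hh : 0 < h) :
    Integrable (fun s => tentLine h s ^ 2) := by
  have hon : IntegrableOn (fun s => tentLine h s ^ 2) (Icc (-h) h) := by
    refine Measure.integrableOn_of_bounded (M := 1) (by simp)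
      ((measurable_tentLine h).pow_const 2).aestronglyMeasurable ?_
    refine Filter.Eventually.of_forall fun s => ?_
    rw [norm_pow, Real.norm_eq_abs]
    exact pow_le_one₀ (abs_nonneg _) (abs_tentLine_le_one hh s)
  refine (integrableOn_iff_integrable_of_support_subset ?_).1 hon
  intro s hs
  by_contra hmem
  refine hs ?_
  have : h ≤ |s| := by
    by_contra! hlt
    exact hmem ⟨(abs_lt.1 hlt).1.le, (abs_lt.1 hlt).2.le⟩
  simp [tentLine_eq_zero this]

lemma measurable_tentDatum (κ β : ℝ) : Measurable (fun p : ℝ × ℝ => tentDatum κ β p.1 p.2) := by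
  unfold tentDatum
  exact ((measurable_tentLine _).comp measurable_snd).mul
    (Real.measurable_sin.comp measurable_fst)

lemma tentDatum_mod2piPos (κ β x y : ℝ) :
    tentDatum κ β (mod2piPos x) y = tentDatum κ β x y := by
  unfold tentDatum mod2piPos
  rw [mul_comm (2 * π), Real.sin_sub_int_mul_two_pi]

/-- `[0, 2π) × ℝ` with Lebesgue measure. -/
def cylMeasure : Measure (ℝ × ℝ) := (volume.restrict (Ico (0:ℝ) (2 * π))).prod volume

instance : SFinite cylMeasure := by unfold cylMeasure; infer_instance

lemma lintegral_tentDatum_sq {κ : ℝ} (hκ : 0 < κ) (β : ℝ) :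
    ∫⁻ p, ‖tentDatum κ β p.1 p.2 ^ 2‖ₑ ∂cylMeasure = ENNReal.ofReal (tentDatumNormSq κ β) := by
  have hsin : Integrable (fun x => Real.sin x ^ 2) (volume.restrict (Ico (0:ℝ) (2 * π))) :=
    ((Real.continuous_sin.pow 2).integrableOn_Icc (a := 0) (b := 2 * π)).mono_set Ico_subset_Icc_self
  have hint : Integrable (fun p : ℝ × ℝ => tentDatum κ β p.1 p.2 ^ 2) cylMeasure := by
    refine (hsin.mul_prod (integrable_tentLine_sq (Real.rpow_pos_of_pos hκ β))).congr ?_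
    exact Filter.Eventually.of_forall fun p => by simp only [tentDatum]; ring
  rw [← ofReal_integral_norm_eq_lintegral_enorm hint]
  congr 1
  simp only [norm_pow, Real.norm_eq_abs, sq_abs]
  rw [cylMeasure, integral_prod _ hint, tentDatumNormSq,
    intervalIntegral.integral_of_le (by positivity), integral_Ico_eq_integral_Ioc]

/-- Chebyshev's inequality for the displacement `√(2κ) W₀`. -/
lemma displacement_tail {Ω : Type} [MeasurableSpace Ω] {P : Measure Ω} {W0 : Ω → ℝ}
    (hW : Measurable W0) {κ t h : ℝ} (hκ : 0 < κ) (ht : 0 < t) (hh : 0 < h)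
    (hlaw : Measure.map W0 P = gaussianReal 0 (Real.toNNReal t)) :
    P {ω | h ≤ |√(2 * κ) * W0 ω|} ≤ ENNReal.ofReal (2 * κ * t / h ^ 2) := by
  have hs : 0 < √(2 * κ) := Real.sqrt_pos.2 (by positivity)
  have hset : {ω | h ≤ |√(2 * κ) * W0 ω|} = W0 ⁻¹' {x | h / √(2 * κ) ≤ |x|} := by
    ext ω
    simp only [mem_ofPred_eq, mem_preimage, abs_mul, abs_of_pos hs, div_le_iff₀ hs]
    rw [mul_comm]
  have hmeas : MeasurableSet {x : ℝ | h / √(2 * κ) ≤ |x|} :=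
    measurableSet_le (by fun_prop) (by fun_prop)
  rw [hset, ← Measure.map_apply hW hmeas, hlaw]
  have hcheb := meas_ge_le_variance_div_sq (μ := gaussianReal 0 (Real.toNNReal t)) (X := id)
    (memLp_id_gaussianReal 2) (c := h / √(2 * κ)) (by positivity)
  have hmean : ∫ x, id x ∂(gaussianReal 0 (Real.toNNReal t)) = 0 := by
    simp
  rw [hmean, variance_id_gaussianReal, Real.coe_toNNReal _ ht.le, div_pow,
    Real.sq_sqrt (by positivity)] at hcheb
  simp only [id, sub_zero] at hcheb
  refine hcheb.trans (le_of_eq ?_)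
  congr 1
  field_simp

/-- Contribution of the region `|y| ≥ 2κ^β`: for a measure-preserving
random field whose `Y`-component is `y + √(2κ)W₀` with `W₀ ~ N(0,t)`, the expected squared
datum sampled at the field is bounded by `C‖ρ₀‖² κ^{n/(n+2)} t`, `β = 1/(n+2)`. -/
theorem outer_region_bound :
    ∃ C : ℝ, 0 < C ∧
      ∀ n : ℕ, 1 ≤ n →
      ∀ κ t : ℝ, κ ∈ Ioo (0:ℝ) 1 → 0 < t →
      ∀ (Ω : Type) (_ : MeasurableSpace Ω) (P : Measure Ω), IsProbabilityMeasure P →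
      ∀ (W0 : Ω → ℝ), Measure.map W0 P = gaussianReal 0 (Real.toNNReal t) →
      ∀ X Y : ℝ → ℝ → Ω → ℝ,
        Measurable (fun q : (ℝ × ℝ) × Ω => (X q.1.1 q.1.2 q.2, Y q.1.1 q.1.2 q.2)) →
        (∀ x y ω, Y x y ω = y + Real.sqrt (2 * κ) * W0 ω) →
        (∀ᵐ ω ∂P, MeasurePreserving
          (fun p : ℝ × ℝ => (mod2piPos (X p.1 p.2 ω), Y p.1 p.2 ω))
          ((volume.restrict (Ico (0:ℝ) (2 * π))).prod volume)
          ((volume.restrict (Ico (0:ℝ) (2 * π))).prod volume)) →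
        (∫ x in (0:ℝ)..(2 * π), ∫ y in {y : ℝ | 2 * κ ^ ((1:ℝ) / (n + 2)) ≤ |y|},
            ∫ ω, (tentDatum κ ((1:ℝ) / (n + 2)) (X x y ω) (Y x y ω)) ^ 2 ∂P)
          ≤ C * tentDatumNormSq κ ((1:ℝ) / (n + 2)) * κ ^ ((n : ℝ) / (n + 2)) * t := by
  refine ⟨2, two_pos, ?_⟩
  intro n _ κ t hκ ht Ω _ P _ W0 hlaw X Y hXY hY hpres
  have hκ0 : 0 < κ := hκ.1
  set β : ℝ := (1:ℝ) / (n + 2) with hβ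
  set h : ℝ := κ ^ β with hh
  have hh0 : 0 < h := Real.rpow_pos_of_pos hκ0 β
  have hs : 0 < √(2 * κ) := Real.sqrt_pos.2 (by positivity)
  -- The formula for `Y` at the origin recovers `W0`, so `W0` is measurable.
  have hW : Measurable W0 := by
    have h1 : Measurable fun ω => Y 0 0 ω / √(2 * κ) :=
      ((measurable_snd.comp hXY).comp
        (measurable_const.prodMk measurable_id : Measurable fun ω : Ω => (((0:ℝ), (0:ℝ)), ω))).div_const _
    convert h1 using 2 with ω
    rw [hY]; field_simp; simp
  set A : Set Ω := {ω | h ≤ |√(2 * κ) * W0 ω|} with hA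
  have hAm : MeasurableSet A := measurableSet_le (by fun_prop) (by fun_prop)
  let G : ℝ × ℝ → Ω → ENNReal := fun p ω => ‖tentDatum κ β (X p.1 p.2 ω) (Y p.1 p.2 ω) ^ 2‖ₑ
  let H : ℝ × ℝ → Ω → ENNReal := fun p => A.indicator (G p)
  have hHm : Measurable (Function.uncurry H) := by
    have hGm : Measurable (Function.uncurry G) :=
      (((measurable_tentDatum κ β).comp hXY).pow_const 2).enorm
    have : Function.uncurry H = (Prod.snd ⁻¹' A).indicator (Function.uncurry G) := by
      ext ⟨p, ω⟩
      simp [H, Function.uncurry, indicator]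
    rw [this]
    exact hGm.indicator (measurable_snd hAm)
  have hGH : ∀ x y ω, 2 * h ≤ |y| → G (x, y) ω = H (x, y) ω := by
    intro x y ω hy
    by_cases hω : ω ∈ A
    · simp [H, hω]
    · have hlt : |√(2 * κ) * W0 ω| < h := not_le.1 hω
      have hYh : h ≤ |Y x y ω| := by
        have := abs_sub_abs_le_abs_add y (√(2 * κ) * W0 ω)
        rw [hY]
        linarith
      have h0 : tentDatum κ β (X x y ω) (Y x y ω) = 0 := by
        rw [tentDatum, tentLine_eq_zero hYh, zero_mul]
      simp [H, G, hω, h0]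
  have hfix : ∀ᵐ ω ∂P, ∫⁻ p, H p ω ∂cylMeasure
      = A.indicator (fun _ => ENNReal.ofReal (tentDatumNormSq κ β)) ω := by
    filter_upwards [hpres] with ω hω
    by_cases hωA : ω ∈ A
    · simp only [H, indicator_of_mem hωA, G]
      rw [← lintegral_tentDatum_sq hκ0 β]
      have := hω.lintegral_comp (f := fun p : ℝ × ℝ => ‖tentDatum κ β p.1 p.2 ^ 2‖ₑ)
        ((measurable_tentDatum κ β).pow_const 2).enorm
      simpa only [tentDatum_mod2piPos, cylMeasure] using this
    · simp [H, hωA]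
  have hSm : MeasurableSet {y : ℝ | 2 * h ≤ |y|} := measurableSet_le (by fun_prop) (by fun_prop)
  have hN : 0 ≤ tentDatumNormSq κ β :=
    intervalIntegral.integral_nonneg (by positivity) fun x _ =>
      integral_nonneg fun y => sq_nonneg _
  have hmain : ‖∫ x in (0:ℝ)..(2 * π), ∫ y in {y : ℝ | 2 * h ≤ |y|},
      ∫ ω, (tentDatum κ β (X x y ω) (Y x y ω)) ^ 2 ∂P‖ₑ
      ≤ ENNReal.ofReal (tentDatumNormSq κ β * (2 * κ * t / h ^ 2)) := by
    rw [intervalIntegral.integral_of_le (by positivity), ← integral_Ico_eq_integral_Ioc]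
    calc _ ≤ ∫⁻ x in Ico (0:ℝ) (2 * π), ∫⁻ y in {y : ℝ | 2 * h ≤ |y|}, ∫⁻ ω, G (x, y) ω ∂P := by
          refine (enorm_integral_le_lintegral_enorm _).trans (lintegral_mono fun x => ?_)
          refine (enorm_integral_le_lintegral_enorm _).trans (lintegral_mono fun y => ?_)
          exact enorm_integral_le_lintegral_enorm _
      _ ≤ ∫⁻ x in Ico (0:ℝ) (2 * π), ∫⁻ y, ∫⁻ ω, H (x, y) ω ∂P := by
          refine lintegral_mono fun x => ?_
          refine (setLIntegral_mono' hSm fun y hy => ?_).trans (setLIntegral_le_lintegral _ _)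
          exact lintegral_mono fun ω => (hGH x y ω hy).le
      _ = ∫⁻ p, ∫⁻ ω, H p ω ∂P ∂cylMeasure := by
          have hHi : Measurable fun p => ∫⁻ ω, H p ω ∂P := hHm.lintegral_prod_right'
          rw [cylMeasure, lintegral_prod _ hHi.aemeasurable]
      _ = ∫⁻ ω, ∫⁻ p, H p ω ∂cylMeasure ∂P := lintegral_lintegral_swap hHm.aemeasurable
      _ = ENNReal.ofReal (tentDatumNormSq κ β) * P A := by
          rw [lintegral_congr_ae hfix, lintegral_indicator_const hAm]
      _ ≤ ENNReal.ofReal (tentDatumNormSq κ β) * ENNReal.ofReal (2 * κ * t / h ^ 2) := by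
          gcongr
          exact displacement_tail hW hκ0 ht hh0 hlaw
      _ = _ := (ENNReal.ofReal_mul hN).symm
  have hpow : κ / h ^ 2 = κ ^ ((n : ℝ) / (n + 2)) := by
    have hn : (n : ℝ) / (n + 2) = 1 - β * 2 := by rw [hβ]; field_simp; ring
    rw [hn, Real.rpow_sub hκ0, Real.rpow_one, Real.rpow_mul hκ0.le, Real.rpow_two]
  rw [← ofReal_norm, ENNReal.ofReal_le_ofReal_iff (by positivity)] at hmain
  refine (Real.le_norm_self _).trans (hmain.trans (le_of_eq ?_))
  rw [← hpow]
  ring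

end
end
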